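/- Fix l ≥ 2 and consider the chain instance: nodes 0, …, l−1 and a destination d, old rule forwarding i to i+1 for i < l−1 and l−1 to d, new rule forwarding 0 to d and i to i−1 for i ≥ 1; for S ⊆ {0, …, l−1}, the mixed forwarding g_S uses the new rule on S and the old rule elsewhere. Consider any round-based update schedule ∅ = S_0 ⊆ S_1 ⊆ ⋯ ⊆ S_r = {0, …, l−1} that is safe under asynchrony, i.e. for every round j and every intermediate set T with S_j ⊆ T ⊆ S_{j+1}, the mixed forwarding g_T is loop-free. Then r ≥ l: each round can safely update at most one rule, so consistently updating this instance requires a number of rounds linear in the number of nodes. (The Ω(n)-rounds lower bound for centralized consistent updates of Figure 1.) -/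

import Mathlib

/-- The mixed forwarding function of the chain instance of Figure 1: nodes
`0, …, l-1` plus a destination (modeled as node `l`).  An updated node
`i ∈ S` uses the new rule (node `0` forwards to the destination, node `i ≥ 1`
forwards to `i - 1`), while a non-updated node `i < l` uses the old rule
(forward to `i + 1`, node `l - 1` forwarding to the destination `l`); the
destination (and anything outside the chain) is a fixed point. -/
def chainFwd (l : ℕ) (S : Finset ℕ) (i : ℕ) : ℕ :=
  if i < l then (if i ∈ S then (if i = 0 then l else i - 1) else i + 1) else i

/-!
If node `i + 1` already uses its new rule while node `i` still uses its old one, the two nodes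
forward to each other. So node `i + 1` cannot be updated in the same round as node `i`, because it
might be the only one of the two whose update has taken effect; node `i` has to be updated in a
strictly earlier round. Hence only node `0` can be updated in the first round, and node `i` is not
updated during the first `i` rounds.
-/

/-- A forwarding function on the nodes `0, …, l - 1` is loop-free if none of them is a periodic
point. Larger numbers are excluded since the destination, node `l`, is a fixed point. -/
def IsLoopFree (l : ℕ) (f : ℕ → ℕ) : Prop :=
  ∀ i : ℕ, i < l → ∀ k : ℕ, 1 ≤ k → f^[k] i ≠ i

/-- A round that enlarges the set of updated nodes from `A` to `B` is safe if it is loop-free under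
asynchrony: every set `T` between `A` and `B` may be the set of updates applied so far. -/
def IsSafeRound (l : ℕ) (A B : Finset ℕ) : Prop :=
  A ⊆ B ∧ ∀ T : Finset ℕ, A ⊆ T → T ⊆ B → IsLoopFree l (chainFwd l T)

section

variable {l i : ℕ} {A B T : Finset ℕ}

lemma chainFwd_of_notMem (hil : i < l) (hi : i ∉ T) : chainFwd l T i = i + 1 := by
  rw [chainFwd, if_pos hil, if_neg hi]

lemma chainFwd_succ_of_mem (hil : i + 1 < l) (hi : i + 1 ∈ T) : chainFwd l T (i + 1) = i := by
  rw [chainFwd, if_pos hil, if_pos hi, if_neg i.succ_ne_zero, Nat.add_sub_cancel]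

lemma IsLoopFree.mem_of_succ_mem (hT : IsLoopFree l (chainFwd l T)) (hil : i + 1 < l)
    (hi : i + 1 ∈ T) : i ∈ T := by
  by_contra hiT
  have two_cycle : (chainFwd l T)^[2] i = i := calc
    (chainFwd l T)^[2] i = chainFwd l T (chainFwd l T i) := rfl
    _ = chainFwd l T (i + 1) := by rw [chainFwd_of_notMem (Nat.lt_of_succ_lt hil) hiT]
    _ = i := chainFwd_succ_of_mem hil hi
  exact hT i (Nat.lt_of_succ_lt hil) 2 one_le_two two_cycle

lemma IsSafeRound.mem_of_succ_mem (hAB : IsSafeRound l A B) (hil : i + 1 < l)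
    (hi : i + 1 ∈ B) : i ∈ A := by
  have loopFree_insert : IsLoopFree l (chainFwd l (insert (i + 1) A)) :=
    hAB.2 _ (Finset.subset_insert _ _) (Finset.insert_subset hi hAB.1)
  have mem_insert : i ∈ insert (i + 1) A :=
    loopFree_insert.mem_of_succ_mem hil (Finset.mem_insert_self _ _)
  exact Finset.mem_of_mem_insert_of_ne mem_insert i.succ_ne_self.symm

end

theorem chain_update_lower_bound_general {l r i : ℕ} {Ss : ℕ → Finset ℕ} (h0 : Ss 0 = ∅)
    (hsafe : ∀ j : ℕ, j < r → IsSafeRound l (Ss j) (Ss (j + 1)))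
    (hil : i < l) (hi : i ∈ Ss r) : i < r := by
  induction r generalizing i with
  | zero => simp [h0] at hi
  | succ r ih =>
    cases i with
    | zero => exact r.succ_pos
    | succ i =>
      have mem_prev : i ∈ Ss r := (hsafe r r.lt_succ_self).mem_of_succ_mem hil hi
      have lt_prev : i < r :=
        ih (fun j hj => hsafe j (Nat.lt_succ_of_lt hj)) (Nat.lt_of_succ_lt hil) mem_prev
      exact Nat.succ_lt_succ lt_prev

/-- The Ω(n)-rounds lower bound for centralized consistent updates of
Figure 1: any round-based update schedule for the chain instance that is
safe under asynchrony (every intermediate set between consecutive rounds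
yields loop-free mixed forwarding) needs at least `l` rounds. -/
theorem chain_update_lower_bound
    (l : ℕ) (hl : 2 ≤ l) (r : ℕ) (Ss : ℕ → Finset ℕ)
    (h0 : Ss 0 = ∅) (hr : Ss r = Finset.range l)
    (hmono : ∀ j : ℕ, j < r → Ss j ⊆ Ss (j + 1))
    (hsafe : ∀ j : ℕ, j < r → ∀ T : Finset ℕ, Ss j ⊆ T → T ⊆ Ss (j + 1) →
      ∀ i : ℕ, i < l → ∀ k : ℕ, 1 ≤ k → (chainFwd l T)^[k] i ≠ i) :
    l ≤ r := by
  have hlast : l - 1 < l := Nat.sub_one_lt_of_lt hl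
  exact Nat.le_of_pred_lt <| chain_update_lower_bound_general h0
    (fun j hj => ⟨hmono j hj, hsafe j hj⟩) hlast (hr ▸ Finset.mem_range.mpr hlast)
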